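/- arXiv:2102.00308 — 2 statements merged into one kernel-verified Lean document; each statement's English description precedes it below -/
import Mathlib

section
/- Let q be a prime power with q ≥ 3, let m ≥ 2 be an integer, and let r be an integer with 1 < r < m(q−1) − 1 and r ≡ 1 (mod q−1). Then there exists a nonzero codeword c of RM_q(r,m) such that wt(c) is strictly greater than the minimum distance of RM_q(r,m), and such that no nonzero codeword c' of RM_q(r,m) has support strictly contained in the support of c. -/
/-!
Write `r = a(q - 1) + 1` with `a ≥ 1`, so `r = q + n(q - 1)` with `n = a - 1`.  Split the `m`
variables into `k` base variables, `n` middle variables and `t` tail variables.  From a polynomial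
`G` of degree `q` in the base variables one gets a codeword by multiplying it with the indicator of the
subspace where the middle coordinates are zero; its weight is `|supp G| · q ^ t` (`wt_liftPoly`).

* For `q ≥ 4` take `k = 2` and
  `G = x^(q-1) - x - y^(q-1) + y + x y^(q-1) - y x^(q-1)`, nonzero exactly on the two axes with the
  origin, `(1,0)` and `(0,1)` removed: `2q - 4 > q - 1` points.
* For `q = 3` take `k = 3` and `G = xyz`, nonzero exactly on the cube `{1,-1}³`: `8 > 6` points.

The word coming from `x · [y = 0]` has weight `(q - 1) q^(k-2) q^t`, which is smaller, so the lift
of `G` does not have minimum weight.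

Minimality uses duality (`eq_zero_of_dual`): a codeword `c'` is orthogonal to every polynomial `H`
with `r + deg H < m(q - 1)`.  If `c'` is supported in the support of the lifted word and `H`
vanishes on that support except at `P` and `Q`, with `H(Q) ≠ 0`, then `c'(P) = 0` forces
`c'(Q) = 0`.  Enough such `H` exist to link all points of the support (`liftPoly_minimal`): points
with the same tail through polynomials in the base variables (`axes_conn`, `cube_conn`), and points
with the same base whose tails differ in one coordinate through polynomials isolating the base point
(`axes_isolated`, `cube_isolated`).  Hence `c'` vanishes everywhere as soon as it vanishes at one
point of the support.
-/

open MvPolynomial Finset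

noncomputable section

/-- `V_q(r,m)`: polynomials of total degree at most `r` with degree at most
`q - 1` in each variable, where `q` is the cardinality of the (finite) field. -/
def Vq (F : Type) [Field F] [Fintype F] (r m : ℕ) : Submodule F (MvPolynomial (Fin m) F) :=
  MvPolynomial.restrictTotalDegree (Fin m) F r ⊓
    MvPolynomial.restrictDegree (Fin m) F (Fintype.card F - 1)

/-- The evaluation map `f ↦ (f(P))_{P ∈ F^m}`. -/
def Ev (F : Type) [Field F] [Fintype F] (m : ℕ) :
    MvPolynomial (Fin m) F →ₗ[F] ((Fin m → F) → F) where
  toFun f := fun a => eval a f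
  map_add' f g := by funext a; simp
  map_smul' c f := by funext a; simp

/-- The generalized Reed–Muller code `RM_q(r,m)`, as a subspace of `F^{F^m}`. -/
def RM (F : Type) [Field F] [Fintype F] (r m : ℕ) : Submodule F ((Fin m → F) → F) :=
  (Vq F r m).map (Ev F m)

/-- Hamming weight of a vector. -/
def wt {ι β : Type*} [Zero β] (c : ι → β) : ℕ := Set.ncard (Function.support c)

/-- Minimum distance of a code. -/
def minDist {F : Type} [Field F] [Fintype F] {m : ℕ}
    (C : Submodule F ((Fin m → F) → F)) : ℕ :=
  sInf {w | ∃ c ∈ C, c ≠ 0 ∧ wt c = w}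

/-! ### Generalities on Reed–Muller codes -/

/-- The reduction `x ^ q = x` lowers every exponent to at most `q - 1`, so the bound on the
individual degrees is no restriction on codewords. -/
lemma Ev_mem_RM {F : Type} [Field F] [Fintype F] {r m : ℕ} (f : MvPolynomial (Fin m) F)
    (hf : f.totalDegree ≤ r) : Ev F m f ∈ RM F r m := by
  classical
  rw [f.as_sum, map_sum]
  refine Submodule.sum_mem _ fun e he => ?_
  have hcard : 1 < Fintype.card F := Fintype.one_lt_card
  obtain ⟨p, hp⟩ : ∃ p, Fintype.card F = p + 2 := ⟨Fintype.card F - 2, by omega⟩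
  -- exponents `≥ 1` are reduced modulo `q - 1` to a representative in `[1, q - 1]`
  let red : ℕ → ℕ := fun n => if n = 0 then 0 else (n - 1) % (p + 1) + 1
  have hred0 : red 0 = 0 := by simp [red]
  have hred1 : ∀ n, red n ≤ n := by
    intro n
    by_cases h : n = 0
    · simp [red, h]
    · simp only [red, h, if_false]
      have := Nat.mod_le (n - 1) (p + 1)
      omega
  have hred2 : ∀ n, red n ≤ Fintype.card F - 1 := by
    intro n
    by_cases h : n = 0
    · simp [red, h]
    · simp only [red, h, if_false]
      have := Nat.mod_lt (n - 1) (Nat.succ_pos p)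
      simp only [Nat.succ_eq_add_one] at this
      omega
  have hred3 : ∀ n (x : F), x ^ red n = x ^ n := by
    intro n x
    by_cases h : n = 0
    · simp [red, h]
    · simp only [red, h, if_false]
      by_cases hx : x = 0
      · simp [hx, h]
      · have h1 : x ^ (p + 1) = 1 := by
          have := FiniteField.pow_card_sub_one_eq_one x hx
          rwa [hp] at this
        conv_rhs => rw [show n = (p + 1) * ((n - 1) / (p + 1)) + (n - 1) % (p + 1) + 1 by
          rw [Nat.div_add_mod]; omega]
        rw [pow_succ, pow_succ, pow_add, pow_mul, h1, one_pow, one_mul]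
  let e' : Fin m →₀ ℕ := e.mapRange red hred0
  have hEq : Ev F m (monomial e (coeff e f)) = Ev F m (monomial e' (coeff e f)) := by
    funext x
    simp only [Ev, LinearMap.coe_mk, AddHom.coe_mk, eval_monomial]
    rw [Finsupp.prod_fintype _ _ (by simp), Finsupp.prod_fintype _ _ (by simp)]
    simp [e', hred3]
  rw [hEq]
  refine Submodule.mem_map_of_mem (Submodule.mem_inf.2 ⟨?_, ?_⟩)
  · rw [mem_restrictTotalDegree]
    refine (totalDegree_monomial_le _ _).trans ?_
    refine le_trans ?_ ((le_totalDegree he).trans hf)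
    rw [Finsupp.sum_fintype _ _ (by simp), Finsupp.sum_fintype _ _ (by simp)]
    exact Finset.sum_le_sum fun i _ => by simpa [e'] using hred1 (e i)
  · rw [mem_restrictDegree]
    intro s hs i
    have := support_monomial_subset hs
    rw [Finset.mem_singleton] at this
    subst this
    simpa [e'] using hred2 (e i)

/-- Duality: a codeword of order `r` is orthogonal to every `H` with `r + deg H < m(q - 1)`.  If
`Q` is the only point where both `c'` and `H` can be nonzero, then `c'` vanishes at `Q`. -/
lemma eq_zero_of_dual {F : Type} [Field F] [Fintype F] {r m : ℕ} {c' : (Fin m → F) → F}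
    (hc' : c' ∈ RM F r m) (H : MvPolynomial (Fin m) F)
    (hH : r + H.totalDegree < m * (Fintype.card F - 1)) (Q : Fin m → F)
    (hQ : eval Q H ≠ 0) (hz : ∀ x, x ≠ Q → c' x ≠ 0 → eval x H = 0) : c' Q = 0 := by
  classical
  obtain ⟨f, hf, rfl⟩ := hc'
  have hd := (mem_restrictTotalDegree _ _ _).1 (Submodule.mem_inf.1 hf).1
  have hs : ∑ x, eval x (f * H) = 0 := by
    apply MvPolynomial.sum_eval_eq_zero
    have := totalDegree_mul f H
    rw [Fintype.card_fin, mul_comm (_ - 1)]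
    omega
  rw [Finset.sum_eq_single Q] at hs
  · rw [map_mul] at hs
    exact (mul_eq_zero.1 hs).resolve_right hQ
  · intro x _ hx
    rw [map_mul]
    by_cases h : eval x f = 0
    · rw [h, zero_mul]
    · rw [hz x hx h, mul_zero]
  · simp

/-- `∏_{a ∈ A} (X_i - a)`, which vanishes exactly where the `i`-th coordinate lies in `A`. -/
def linProd {F : Type} [Field F] {σ : Type} (i : σ) (A : Finset F) : MvPolynomial σ F :=
  ∏ a ∈ A, (X i - C a)

lemma totalDegree_linProd {F : Type} [Field F] {σ : Type} (i : σ) (A : Finset F) :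
    (linProd i A).totalDegree ≤ A.card := by
  refine (totalDegree_finsetProd _ _).trans ?_
  refine (Finset.sum_le_card_nsmul _ _ 1 fun a _ => ?_).trans (by simp)
  refine (totalDegree_sub_C_le _ _).trans ?_
  simp

lemma eval_linProd_ne {F : Type} [Field F] {σ : Type} (i : σ) (A : Finset F) (x : σ → F) :
    eval x (linProd i A) ≠ 0 ↔ x i ∉ A := by
  simp only [linProd, map_prod, map_sub, eval_X, eval_C, Finset.prod_ne_zero_iff, sub_ne_zero]
  exact ⟨fun h hx => h _ hx rfl, fun h a ha e => h (e ▸ ha)⟩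

/-! ### Lifting a word from few variables -/

/-- The point of `F ^ m` with base coordinates `b`, middle coordinates `u` and tail `τ`. -/
def pt {F : Type} {k n t m : ℕ} (ε : Fin k ⊕ Fin n ⊕ Fin t ≃ Fin m)
    (b : Fin k → F) (u : Fin n → F) (τ : Fin t → F) : Fin m → F :=
  fun i => Sum.elim b (Sum.elim u τ) (ε.symm i)

lemma exists_pt {F : Type} {k n t m : ℕ} (ε : Fin k ⊕ Fin n ⊕ Fin t ≃ Fin m)
    (x : Fin m → F) : ∃ b u τ, x = pt ε b u τ := by
  refine ⟨fun i => x (ε (.inl i)), fun i => x (ε (.inr (.inl i))),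
    fun i => x (ε (.inr (.inr i))), ?_⟩
  funext i
  obtain ⟨j, rfl⟩ := ε.surjective i
  rcases j with j | j | j <;> simp [pt]

lemma pt_inj {F : Type} {k n t m : ℕ} (ε : Fin k ⊕ Fin n ⊕ Fin t ≃ Fin m)
    {b b' : Fin k → F} {u u' : Fin n → F} {τ τ' : Fin t → F} :
    pt ε b u τ = pt ε b' u' τ' ↔ b = b' ∧ u = u' ∧ τ = τ' := by
  constructor
  · intro h
    refine ⟨?_, ?_, ?_⟩ <;> funext i
    · simpa [pt] using congrFun h (ε (.inl i))
    · simpa [pt] using congrFun h (ε (.inr (.inl i)))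
    · simpa [pt] using congrFun h (ε (.inr (.inr i)))
  · rintro ⟨rfl, rfl, rfl⟩; rfl

open Classical in
/-- The polynomial `G(base) · ∏_j ∏_{a ≠ 0} (X_j - a)`, the product being over the middle
variables: up to a nonzero scalar, `G` on the subspace where the middle coordinates are zero,
independently of the tail. -/
def liftPoly {F : Type} [Field F] [Fintype F] {k n t m : ℕ}
    (ε : Fin k ⊕ Fin n ⊕ Fin t ≃ Fin m) (G : MvPolynomial (Fin k) F) :
    MvPolynomial (Fin m) F :=
  rename (fun i => ε (.inl i)) G * ∏ j, linProd (ε (.inr (.inl j))) (univ.erase 0)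

/-- The dual test polynomial `h(base) · ∏_j ∏_{a ∈ A j} (X_j - a)`, the product being over the
tail variables. -/
def testPoly {F : Type} [Field F] {k n t m : ℕ}
    (ε : Fin k ⊕ Fin n ⊕ Fin t ≃ Fin m) (h : MvPolynomial (Fin k) F) (A : Fin t → Finset F) :
    MvPolynomial (Fin m) F :=
  rename (fun i => ε (.inl i)) h * ∏ j, linProd (ε (.inr (.inr j))) (A j)

lemma totalDegree_liftPoly {F : Type} [Field F] [Fintype F] {k n t m : ℕ}
    (ε : Fin k ⊕ Fin n ⊕ Fin t ≃ Fin m) (G : MvPolynomial (Fin k) F) :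
    (liftPoly ε G).totalDegree ≤ G.totalDegree + n * (Fintype.card F - 1) := by
  classical
  refine (totalDegree_mul _ _).trans (add_le_add (totalDegree_rename_le _ _) ?_)
  refine (totalDegree_finsetProd _ _).trans ?_
  refine (Finset.sum_le_card_nsmul _ _ (Fintype.card F - 1) fun a _ => ?_).trans (by simp)
  refine (totalDegree_linProd _ _).trans (le_of_eq ?_)
  rw [Finset.card_erase_of_mem (Finset.mem_univ _), Finset.card_univ]

lemma totalDegree_testPoly {F : Type} [Field F] {k n t m : ℕ}
    (ε : Fin k ⊕ Fin n ⊕ Fin t ≃ Fin m) (h : MvPolynomial (Fin k) F) (A : Fin t → Finset F) :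
    (testPoly ε h A).totalDegree ≤ h.totalDegree + ∑ j, (A j).card := by
  refine (totalDegree_mul _ _).trans (add_le_add (totalDegree_rename_le _ _) ?_)
  exact (totalDegree_finsetProd _ _).trans
    (Finset.sum_le_sum fun j _ => totalDegree_linProd _ _)

lemma eval_liftPoly_ne {F : Type} [Field F] [Fintype F] {k n t m : ℕ}
    (ε : Fin k ⊕ Fin n ⊕ Fin t ≃ Fin m) (G : MvPolynomial (Fin k) F)
    (b : Fin k → F) (u : Fin n → F) (τ : Fin t → F) :
    eval (pt ε b u τ) (liftPoly ε G) ≠ 0 ↔ eval b G ≠ 0 ∧ u = 0 := by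
  classical
  have hb : pt ε b u τ ∘ (fun i => ε (.inl i)) = b := by funext i; simp [pt]
  rw [liftPoly, map_mul, eval_rename, hb, map_prod, mul_ne_zero_iff, Finset.prod_ne_zero_iff]
  simp only [eval_linProd_ne]
  simp [pt, funext_iff]

lemma eval_testPoly_ne {F : Type} [Field F] {k n t m : ℕ}
    (ε : Fin k ⊕ Fin n ⊕ Fin t ≃ Fin m) (h : MvPolynomial (Fin k) F) (A : Fin t → Finset F)
    (b : Fin k → F) (u : Fin n → F) (τ : Fin t → F) :
    eval (pt ε b u τ) (testPoly ε h A) ≠ 0 ↔ eval b h ≠ 0 ∧ ∀ j, τ j ∉ A j := by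
  have hb : pt ε b u τ ∘ (fun i => ε (.inl i)) = b := by funext i; simp [pt]
  rw [testPoly, map_mul, eval_rename, hb, map_prod, mul_ne_zero_iff, Finset.prod_ne_zero_iff]
  simp only [eval_linProd_ne]
  simp [pt]

lemma wt_liftPoly {F : Type} [Field F] [Fintype F] {k n t m : ℕ}
    (ε : Fin k ⊕ Fin n ⊕ Fin t ≃ Fin m) (G : MvPolynomial (Fin k) F) :
    wt (Ev F m (liftPoly ε G)) = {b | eval b G ≠ 0}.ncard * Fintype.card F ^ t := by
  have hinj : Function.Injective (fun p : (Fin k → F) × (Fin t → F) => pt ε p.1 0 p.2) := by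
    rintro ⟨b, τ⟩ ⟨b', τ'⟩ h
    have := (pt_inj ε).1 h
    exact Prod.ext this.1 this.2.2
  have hS : Function.support (Ev F m (liftPoly ε G)) =
      (fun p : (Fin k → F) × (Fin t → F) => pt ε p.1 0 p.2) ''
        ({b | eval b G ≠ 0} ×ˢ Set.univ) := by
    ext x
    obtain ⟨b, u, τ, rfl⟩ := exists_pt ε x
    rw [Function.mem_support]
    change eval _ _ ≠ 0 ↔ _
    rw [eval_liftPoly_ne]
    constructor
    · rintro ⟨h, rfl⟩
      exact ⟨(b, τ), ⟨h, trivial⟩, rfl⟩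
    · rintro ⟨⟨b', τ'⟩, ⟨h, -⟩, e⟩
      obtain ⟨rfl, rfl, rfl⟩ := (pt_inj ε).1 e
      exact ⟨h, rfl⟩
  rw [wt, hS, Set.ncard_image_of_injective _ hinj, Set.ncard_prod, Set.ncard_univ,
    Nat.card_eq_fintype_card]
  simp

/-- Two base points are linked when some `h` of degree at most `D` vanishes on the support of `G`
outside `{b, b'}` but not at `b'`.  A codeword supported inside the support of `G` that is
orthogonal to such an `h` and vanishes at `b` then vanishes at `b'`. -/
def Linked {F : Type} [Field F] {k : ℕ} (G : MvPolynomial (Fin k) F) (D : ℕ)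
    (b b' : Fin k → F) : Prop :=
  ∃ h : MvPolynomial (Fin k) F, h.totalDegree ≤ D ∧ eval b' h ≠ 0 ∧
    ∀ b'', eval b'' G ≠ 0 → eval b'' h ≠ 0 → b'' = b ∨ b'' = b'

/-- Vanishing spreads over the whole support: inside a slice with fixed tail along linked base
points, and over a fixed base point by changing one tail coordinate at a time. -/
lemma liftPoly_minimal {F : Type} [Field F] [Fintype F] {k n t m : ℕ}
    (ε : Fin k ⊕ Fin n ⊕ Fin t ≃ Fin m) (G : MvPolynomial (Fin k) F) {r D : ℕ}
    (hr : r + (t * (Fintype.card F - 1) + D) < m * (Fintype.card F - 1))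
    (hiso : ∀ b, eval b G ≠ 0 → ∃ h : MvPolynomial (Fin k) F, h.totalDegree ≤ D + 1 ∧
      eval b h ≠ 0 ∧ ∀ b', eval b' G ≠ 0 → eval b' h ≠ 0 → b' = b)
    (hconn : ∀ b b', eval b G ≠ 0 → eval b' G ≠ 0 → Relation.ReflTransGen (Linked G D) b b') :
    ¬ ∃ c' : (Fin m → F) → F, c' ∈ RM F r m ∧ c' ≠ 0 ∧
      Function.support c' ⊂ Function.support (Ev F m (liftPoly ε G)) := by
  classical
  rintro ⟨c', hc', hne, hsub, hns⟩
  have hq : 2 ≤ Fintype.card F := Fintype.one_lt_card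
  have hsupp : ∀ b u τ, c' (pt ε b u τ) ≠ 0 → eval b G ≠ 0 ∧ u = 0 := fun b u τ h =>
    (eval_liftPoly_ne ε G b u τ).1 (hsub h)
  have hslice : ∀ b b' τ, Linked G D b b' → c' (pt ε b 0 τ) = 0 → c' (pt ε b' 0 τ) = 0 := by
    rintro b b' τ ⟨h, hd, hb', hz⟩ h0
    refine eq_zero_of_dual hc' (testPoly ε h fun j => univ.erase (τ j)) ?_ _ ?_ ?_
    · refine lt_of_le_of_lt (Nat.add_le_add_left (totalDegree_testPoly ε _ _) _) ?_
      simp only [Finset.card_erase_of_mem (Finset.mem_univ _), Finset.card_univ,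
        Finset.sum_const, Fintype.card_fin, smul_eq_mul]
      omega
    · rw [eval_testPoly_ne]
      exact ⟨hb', by simp⟩
    · intro x hx hcx
      obtain ⟨b'', u, τ', rfl⟩ := exists_pt ε x
      obtain ⟨hG, rfl⟩ := hsupp _ _ _ hcx
      by_contra hcon
      obtain ⟨h1, h2⟩ := (eval_testPoly_ne ε _ _ _ _ _).1 hcon
      have hτ : τ' = τ := by funext j; simpa using h2 j
      subst hτ
      rcases hz _ hG h1 with rfl | rfl
      · exact hcx h0
      · exact hx rfl
  have hmove : ∀ b τ j w, eval b G ≠ 0 → c' (pt ε b 0 τ) = 0 →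
      c' (pt ε b 0 (Function.update τ j w)) = 0 := by
    intro b τ j w hb h0
    by_cases hw : τ j = w
    · rwa [← hw, Function.update_eq_self]
    obtain ⟨h, hd, hbh, hz⟩ := hiso b hb
    -- isolating `b` costs one more degree, which the `j`-th tail factor saves by having one root
    -- less
    let A : Fin t → Finset F := fun i =>
      if i = j then (univ.erase (τ j)).erase w else univ.erase (τ i)
    have hA : ∑ i, (A i).card + 1 ≤ t * (Fintype.card F - 1) := by
      have h1 : ∀ i ∈ univ.erase j, (A i).card = Fintype.card F - 1 := by
        intro i hi
        simp only [A, if_neg (Finset.ne_of_mem_erase hi)]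
        rw [Finset.card_erase_of_mem (Finset.mem_univ _), Finset.card_univ]
      have h2 : (A j).card = Fintype.card F - 2 := by
        simp only [A, if_true]
        rw [Finset.card_erase_of_mem (by simp [Ne.symm hw]),
          Finset.card_erase_of_mem (Finset.mem_univ _), Finset.card_univ]
        omega
      rw [← Finset.add_sum_erase _ _ (Finset.mem_univ j), Finset.sum_congr rfl h1, h2]
      simp only [Finset.sum_const, Finset.card_erase_of_mem (Finset.mem_univ _),
        Finset.card_univ, Fintype.card_fin, smul_eq_mul]
      obtain ⟨t', rfl⟩ : ∃ t', t = t' + 1 := ⟨t - 1, by have := j.2; omega⟩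
      rw [Nat.add_sub_cancel, Nat.add_mul]
      omega
    refine eq_zero_of_dual hc' (testPoly ε h A) ?_ _ ?_ ?_
    · have := totalDegree_testPoly ε h A
      omega
    · rw [eval_testPoly_ne]
      refine ⟨hbh, fun i => ?_⟩
      by_cases hi : i = j
      · subst hi; simp [A]
      · simp [A, hi]
    · intro x hx hcx
      obtain ⟨b'', u, τ', rfl⟩ := exists_pt ε x
      obtain ⟨hG, rfl⟩ := hsupp _ _ _ hcx
      by_contra hcon
      obtain ⟨h1, h2⟩ := (eval_testPoly_ne ε _ _ _ _ _).1 hcon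
      obtain rfl := hz _ hG h1
      have h3 : ∀ i, i ≠ j → τ' i = τ i := fun i hi => by simpa [A, hi] using h2 i
      have h4 : τ' j = w ∨ τ' j = τ j := by
        have := h2 j
        simp only [A, if_true, Finset.mem_erase, Finset.mem_univ, and_true] at this
        tauto
      rcases h4 with h4 | h4
      · apply hx
        congr 1
        funext i
        by_cases hi : i = j
        · subst hi; simpa using h4
        · simpa [hi] using h3 i hi
      · apply hcx
        have : τ' = τ := by
          funext i
          by_cases hi : i = j
          · rw [hi, h4]
          · exact h3 i hi
        rw [this, h0]
  -- the strict inclusion provides one point of the support of the lifted word where `c'` vanishes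
  obtain ⟨x, hx, hx0⟩ := Set.not_subset.1 hns
  obtain ⟨b, u, τ, rfl⟩ := exists_pt ε x
  obtain ⟨hb, rfl⟩ := (eval_liftPoly_ne ε G b u τ).1 hx
  rw [Function.mem_support, not_not] at hx0
  apply hne
  funext y
  obtain ⟨b', u', τ', rfl⟩ := exists_pt ε y
  by_contra hy
  obtain ⟨hb', rfl⟩ := hsupp _ _ _ hy
  apply hy
  have h1 : ∀ s : Finset (Fin t), c' (pt ε b 0 (s.piecewise τ' τ)) = 0 := by
    intro s
    induction s using Finset.induction_on with
    | empty => simpa using hx0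
    | insert j s _ ih =>
      rw [Finset.piecewise_insert]
      exact hmove _ _ _ _ hb ih
  have h2 : c' (pt ε b 0 τ') = 0 := by simpa using h1 univ
  have h3 := hconn b b' hb hb'
  clear hy hb'
  induction h3 with
  | refl => exact h2
  | tail _ hl ih => exact hslice _ _ _ hl ih

/-! ### Base words -/

/-- The base word for `q ≥ 4`: a plane curve of degree `q` which is nonzero exactly on the two
coordinate axes without the origin and the points `(1, 0)`, `(0, 1)`. -/
def axesPoly (F : Type) [Field F] [Fintype F] : MvPolynomial (Fin 2) F :=
  X 0 ^ (Fintype.card F - 1) - X 0 - X 1 ^ (Fintype.card F - 1) + X 1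
    + X 0 * X 1 ^ (Fintype.card F - 1) - X 1 * X 0 ^ (Fintype.card F - 1)

lemma totalDegree_axesPoly (F : Type) [Field F] [Fintype F] :
    (axesPoly F).totalDegree ≤ Fintype.card F := by
  have hq : 2 ≤ Fintype.card F := Fintype.one_lt_card
  have h1 : ∀ i : Fin 2, ((X i : MvPolynomial (Fin 2) F)).totalDegree ≤ Fintype.card F :=
    fun i => by rw [totalDegree_X]; omega
  have h2 : ∀ i : Fin 2, ((X i : MvPolynomial (Fin 2) F) ^ (Fintype.card F - 1)).totalDegree
      ≤ Fintype.card F := fun i => by rw [totalDegree_X_pow]; omega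
  have h3 : ∀ i j : Fin 2, ((X i : MvPolynomial (Fin 2) F) *
      X j ^ (Fintype.card F - 1)).totalDegree ≤ Fintype.card F := fun i j => by
    refine (totalDegree_mul _ _).trans ?_
    rw [totalDegree_X_pow, totalDegree_X]; omega
  unfold axesPoly
  refine (totalDegree_sub _ _).trans (max_le ?_ (h3 _ _))
  refine (totalDegree_add _ _).trans (max_le ?_ (h3 _ _))
  refine (totalDegree_add _ _).trans (max_le ?_ (h1 _))
  refine (totalDegree_sub _ _).trans (max_le ?_ (h2 _))
  exact (totalDegree_sub _ _).trans (max_le (h2 _) (h1 _))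

lemma eval_axesPoly_ne {F : Type} [Field F] [Fintype F] (b : Fin 2 → F) :
    eval b (axesPoly F) ≠ 0 ↔
      ∃ x : F, x ≠ 0 ∧ x ≠ 1 ∧ (b = ![x, 0] ∨ b = ![0, x]) := by
  have hq : Fintype.card F - 1 ≠ 0 := by
    have : 1 < Fintype.card F := Fintype.one_lt_card
    omega
  obtain ⟨x, y, rfl⟩ : ∃ x y, b = ![x, y] := ⟨b 0, b 1, by ext i; fin_cases i <;> rfl⟩
  have he : eval ![x, y] (axesPoly F) = x ^ (Fintype.card F - 1) - x - y ^ (Fintype.card F - 1)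
      + y + x * y ^ (Fintype.card F - 1) - y * x ^ (Fintype.card F - 1) := by
    simp [axesPoly]
  have hv : ∀ a c : F, ![x, y] = ![a, c] ↔ x = a ∧ y = c := by
    intro a c
    simp [funext_iff, Fin.forall_fin_two]
  rw [he]
  simp only [hv]
  by_cases hx : x = 0
  · subst hx
    by_cases hy : y = 0
    · subst hy; simp [hq]
    · have h1 := FiniteField.pow_card_sub_one_eq_one y hy
      rw [h1, zero_pow hq]
      have : (0 : F) - 0 - 1 + y + 0 * 1 - y * 0 = y - 1 := by ring
      rw [this, sub_ne_zero]
      constructor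
      · intro h; exact ⟨y, hy, h, .inr ⟨rfl, rfl⟩⟩
      · rintro ⟨z, hz, hz1, ⟨h, -⟩ | ⟨-, rfl⟩⟩
        · exact absurd h.symm hz
        · exact hz1
  · have h0 := FiniteField.pow_card_sub_one_eq_one x hx
    by_cases hy : y = 0
    · subst hy
      rw [h0, zero_pow hq]
      have : (1 : F) - x - 0 + 0 + x * 0 - 0 * 1 = -(x - 1) := by ring
      rw [this, neg_ne_zero, sub_ne_zero]
      constructor
      · intro h; exact ⟨x, hx, h, .inl ⟨rfl, rfl⟩⟩
      · rintro ⟨z, hz, hz1, ⟨rfl, -⟩ | ⟨-, h⟩⟩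
        · exact hz1
        · exact absurd h.symm hz
    · have h1 := FiniteField.pow_card_sub_one_eq_one y hy
      rw [h0, h1]
      have : (1 : F) - x - 1 + y + x * 1 - y * 1 = 0 := by ring
      simp only [this, ne_eq, not_true_eq_false, false_iff]
      rintro ⟨z, hz, hz1, ⟨-, h⟩ | ⟨h, -⟩⟩
      · exact hy h
      · exact hx h

lemma card_axes {F : Type} [Field F] [Fintype F] (hq : 4 ≤ Fintype.card F) :
    Fintype.card F - 1 < {b | eval b (axesPoly F) ≠ 0}.ncard := by
  classical
  let A : Finset F := (univ.erase 0).erase 1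
  have hA : A.card = Fintype.card F - 2 := by
    rw [Finset.card_erase_of_mem (by simp), Finset.card_erase_of_mem (by simp),
      Finset.card_univ]
    omega
  let S : Finset (Fin 2 → F) := A.image (fun x => ![x, 0]) ∪ A.image (fun x => ![0, x])
  have hS : S.card = (Fintype.card F - 2) + (Fintype.card F - 2) := by
    rw [Finset.card_union_of_disjoint, Finset.card_image_of_injective,
      Finset.card_image_of_injective, hA]
    · intro x y h; simpa using congrFun h 1
    · intro x y h; simpa using congrFun h 0
    · rw [Finset.disjoint_left]
      intro b hb hb'
      obtain ⟨x, hx, rfl⟩ := Finset.mem_image.1 hb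
      obtain ⟨y, hy, h⟩ := Finset.mem_image.1 hb'
      have h1 : (0 : F) = x := by simpa using congrFun h 0
      simp [A, ← h1] at hx
  have hsub : (S : Set (Fin 2 → F)) ⊆ {b | eval b (axesPoly F) ≠ 0} := by
    intro b hb
    rw [Set.mem_ofPred_eq, eval_axesPoly_ne]
    simp only [S, A, Finset.coe_union, Finset.coe_image, Set.mem_union, Set.mem_image,
      Finset.mem_coe, Finset.mem_erase, Finset.mem_univ, and_true] at hb
    rcases hb with ⟨x, ⟨h1, h0⟩, rfl⟩ | ⟨x, ⟨h1, h0⟩, rfl⟩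
    · exact ⟨x, h0, h1, .inl rfl⟩
    · exact ⟨x, h0, h1, .inr rfl⟩
  have := Set.ncard_le_ncard hsub (Set.toFinite _)
  rw [Set.ncard_coe_finset, hS] at this
  omega

/-- A point on one axis and a point on the other are linked by
`p(X_0)/p(0) + p'(X_1)/p'(0) - 1`, where `p` and `p'` have degree `q - 3` and vanish on the other
support points of the respective axis; this restricts to a multiple of `p`, resp. `p'`, on each
axis. -/
lemma axes_linked {F : Type} [Field F] [Fintype F] (x y : F)
    (hx0 : x ≠ 0) (hx1 : x ≠ 1) (hy0 : y ≠ 0) (hy1 : y ≠ 1) :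
    Linked (axesPoly F) (Fintype.card F - 3) ![x, 0] ![0, y] ∧
    Linked (axesPoly F) (Fintype.card F - 3) ![0, y] ![x, 0] := by
  classical
  let A : F → Finset F := fun z => ((univ.erase 0).erase 1).erase z
  have hA : ∀ z, z ≠ 0 → z ≠ 1 → (A z).card = Fintype.card F - 3 := by
    intro z h0 h1
    rw [Finset.card_erase_of_mem (by simp [h0, h1]), Finset.card_erase_of_mem (by simp),
      Finset.card_erase_of_mem (by simp), Finset.card_univ]
    omega
  let P : Fin 2 → F → MvPolynomial (Fin 2) F := fun i z => linProd i (A z)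
  have hdeg : ∀ (i : Fin 2) z (α : F), z ≠ 0 → z ≠ 1 →
      (C α * P i z).totalDegree ≤ Fintype.card F - 3 := by
    intro i z α h0 h1
    refine (totalDegree_mul _ _).trans ?_
    rw [totalDegree_C, zero_add, ← hA z h0 h1]
    exact totalDegree_linProd _ _
  -- the value of `P i z` only depends on the `i`-th coordinate
  have hval : ∀ (i : Fin 2) z (b b' : Fin 2 → F), b i = b' i →
      eval b (P i z) = eval b' (P i z) := by
    intro i z b b' h
    simp [P, linProd, h]
  have hP0 : ∀ i z, eval 0 (P i z) ≠ 0 := by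
    intro i z
    rw [eval_linProd_ne]; simp [A]
  let h : MvPolynomial (Fin 2) F :=
    C (eval 0 (P 0 x))⁻¹ * P 0 x + C (eval 0 (P 1 y))⁻¹ * P 1 y - C 1
  have hd : h.totalDegree ≤ Fintype.card F - 3 := by
    refine (totalDegree_sub_C_le _ _).trans ?_
    exact (totalDegree_add _ _).trans (max_le (hdeg _ _ _ hx0 hx1) (hdeg _ _ _ hy0 hy1))
  have hX : ∀ z : F, eval ![z, 0] h = (eval 0 (P 0 x))⁻¹ * eval ![z, 0] (P 0 x) := by
    intro z
    simp only [h, map_sub, map_add, map_mul, eval_C]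
    rw [hval 1 y ![z, 0] 0 (by simp), inv_mul_cancel₀ (hP0 _ _)]
    ring
  have hY : ∀ z : F, eval ![0, z] h = (eval 0 (P 1 y))⁻¹ * eval ![0, z] (P 1 y) := by
    intro z
    simp only [h, map_sub, map_add, map_mul, eval_C]
    rw [hval 0 x ![0, z] 0 (by simp), inv_mul_cancel₀ (hP0 _ _)]
    ring
  have hX' : ∀ z : F, eval ![z, 0] h ≠ 0 ↔ z ∉ A x := by
    intro z
    rw [hX, mul_ne_zero_iff, eval_linProd_ne]
    exact and_iff_right (inv_ne_zero (hP0 _ _))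
  have hY' : ∀ z : F, eval ![0, z] h ≠ 0 ↔ z ∉ A y := by
    intro z
    rw [hY, mul_ne_zero_iff, eval_linProd_ne]
    exact and_iff_right (inv_ne_zero (hP0 _ _))
  have hmain : ∀ b, eval b (axesPoly F) ≠ 0 → eval b h ≠ 0 → b = ![x, 0] ∨ b = ![0, y] := by
    intro b hb hbh
    obtain ⟨z, hz0, hz1, rfl | rfl⟩ := (eval_axesPoly_ne b).1 hb
    · rw [hX'] at hbh
      simp only [A, Finset.mem_erase, Finset.mem_univ, and_true] at hbh
      left
      have : z = x := by tauto
      rw [this]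
    · rw [hY'] at hbh
      simp only [A, Finset.mem_erase, Finset.mem_univ, and_true] at hbh
      right
      have : z = y := by tauto
      rw [this]
  refine ⟨⟨h, hd, ?_, hmain⟩, ⟨h, hd, ?_, fun b h1 h2 => (hmain b h1 h2).symm⟩⟩
  · rw [hY']; simp [A]
  · rw [hX']; simp [A]

lemma axes_conn {F : Type} [Field F] [Fintype F] (b b' : Fin 2 → F)
    (hb : eval b (axesPoly F) ≠ 0) (hb' : eval b' (axesPoly F) ≠ 0) :
    Relation.ReflTransGen (Linked (axesPoly F) (Fintype.card F - 3)) b b' := by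
  obtain ⟨x, hx0, hx1, hx⟩ := (eval_axesPoly_ne b).1 hb
  obtain ⟨y, hy0, hy1, hy⟩ := (eval_axesPoly_ne b').1 hb'
  rcases hx with rfl | rfl <;> rcases hy with rfl | rfl
  · exact .tail (.single (axes_linked x x hx0 hx1 hx0 hx1).1)
      (axes_linked y x hy0 hy1 hx0 hx1).2
  · exact .single (axes_linked x y hx0 hx1 hy0 hy1).1
  · exact .single (axes_linked y x hy0 hy1 hx0 hx1).2
  · exact .tail (.single (axes_linked x x hx0 hx1 hx0 hx1).2)
      (axes_linked x y hx0 hx1 hy0 hy1).1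

lemma axes_isolated {F : Type} [Field F] [Fintype F] (hq : 4 ≤ Fintype.card F) (b : Fin 2 → F)
    (hb : eval b (axesPoly F) ≠ 0) :
    ∃ h : MvPolynomial (Fin 2) F, h.totalDegree ≤ Fintype.card F - 3 + 1 ∧
      eval b h ≠ 0 ∧ ∀ b', eval b' (axesPoly F) ≠ 0 → eval b' h ≠ 0 → b' = b := by
  classical
  obtain ⟨x, hx0, hx1, hx⟩ := (eval_axesPoly_ne b).1 hb
  have hA : ((univ.erase (1 : F)).erase x).card = Fintype.card F - 3 + 1 := by
    rw [Finset.card_erase_of_mem (by simp [hx1]), Finset.card_erase_of_mem (by simp),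
      Finset.card_univ]
    omega
  -- the root `0` kills the other axis
  have key : ∀ z : F, z ≠ 1 → z ∉ (univ.erase (1 : F)).erase x → z = x := by
    intro z h1 h
    simp only [Finset.mem_erase, Finset.mem_univ, and_true] at h
    tauto
  rcases hx with rfl | rfl
  · refine ⟨linProd 0 ((univ.erase 1).erase x), (totalDegree_linProd _ _).trans hA.le, ?_, ?_⟩
    · rw [eval_linProd_ne]; simp
    · intro b' hb' h
      rw [eval_linProd_ne] at h
      obtain ⟨z, hz0, hz1, rfl | rfl⟩ := (eval_axesPoly_ne b').1 hb'
      · rw [key z hz1 (by simpa using h)]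
      · exact absurd (key 0 zero_ne_one (by simpa using h)) hx0.symm
  · refine ⟨linProd 1 ((univ.erase 1).erase x), (totalDegree_linProd _ _).trans hA.le, ?_, ?_⟩
    · rw [eval_linProd_ne]; simp
    · intro b' hb' h
      rw [eval_linProd_ne] at h
      obtain ⟨z, hz0, hz1, rfl | rfl⟩ := (eval_axesPoly_ne b').1 hb'
      · exact absurd (key 0 zero_ne_one (by simpa using h)) hx0.symm
      · rw [key z hz1 (by simpa using h)]

/-- The base word for `q = 3`: it is nonzero exactly on the cube `{1, -1}³`. -/
def cubePoly (F : Type) [Field F] : MvPolynomial (Fin 3) F := ∏ i, X i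

lemma totalDegree_cubePoly (F : Type) [Field F] : (cubePoly F).totalDegree ≤ 3 := by
  refine (totalDegree_finsetProd _ _).trans ?_
  simp

lemma eval_cubePoly_ne {F : Type} [Field F] (b : Fin 3 → F) :
    eval b (cubePoly F) ≠ 0 ↔ ∀ i, b i ≠ 0 := by
  simp [cubePoly, Finset.prod_eq_zero_iff]

lemma card_cube {F : Type} [Field F] [Fintype F] (hq : Fintype.card F = 3) :
    {b | eval b (cubePoly F) ≠ 0}.ncard = 8 := by
  classical
  have : {b | eval b (cubePoly F) ≠ 0} =
      (Fintype.piFinset (fun _ : Fin 3 => (univ.erase 0 : Finset F)) : Set (Fin 3 → F)) := by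
    ext b
    rw [Set.mem_ofPred_eq, eval_cubePoly_ne]
    simp
  rw [this, Set.ncard_coe_finset, Fintype.card_piFinset]
  simp [hq]

lemma eq_neg_of_ne {F : Type} [Field F] [Fintype F] (hq : Fintype.card F = 3) {x y : F}
    (hx : x ≠ 0) (hy : y ≠ 0) (hne : x ≠ y) : x = -y := by
  have h1 := FiniteField.pow_card_sub_one_eq_one x hx
  have h2 := FiniteField.pow_card_sub_one_eq_one y hy
  rw [hq] at h1 h2
  have : (x - y) * (x + y) = 0 := by linear_combination h1 - h2
  exact eq_neg_of_add_eq_zero_left ((mul_eq_zero.1 this).resolve_left (sub_ne_zero.2 hne))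

/-- The polynomial `∏_{i ∈ s} (X_i + b_i)` selects, on the cube, the points that agree with `b`
on `s`. -/
lemma cube_select {F : Type} [Field F] [Fintype F] (hq : Fintype.card F = 3) (b : Fin 3 → F)
    (hb : ∀ i, b i ≠ 0) (s : Finset (Fin 3)) :
    ∃ h : MvPolynomial (Fin 3) F, h.totalDegree ≤ s.card ∧
      ∀ b' : Fin 3 → F, (∀ i, b' i ≠ 0) → (eval b' h ≠ 0 ↔ ∀ i ∈ s, b' i = b i) := by
  have h2 : (2 : F) ≠ 0 := by
    intro h
    have h3 := FiniteField.cast_card_eq_zero F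
    rw [hq] at h3
    apply one_ne_zero (α := F)
    push_cast at h3
    linear_combination h3 - h
  refine ⟨∏ i ∈ s, (X i + C (b i)), ?_, ?_⟩
  · refine (totalDegree_finsetProd _ _).trans ?_
    refine (Finset.sum_le_card_nsmul _ _ 1 fun i _ => ?_).trans (by simp)
    refine (totalDegree_add _ _).trans ?_
    simp
  · intro b' hb'
    simp only [map_prod, map_add, eval_X, eval_C, Finset.prod_ne_zero_iff]
    refine forall₂_congr fun i _ => ⟨fun h => ?_, fun h => ?_⟩
    · by_contra hne
      exact h (by rw [eq_neg_of_ne hq (hb' i) (hb i) hne, neg_add_cancel])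
    · rw [h, ← two_mul]
      exact mul_ne_zero h2 (hb i)

lemma cube_conn {F : Type} [Field F] [Fintype F] (hq : Fintype.card F = 3) (b b' : Fin 3 → F)
    (hb : eval b (cubePoly F) ≠ 0) (hb' : eval b' (cubePoly F) ≠ 0) :
    Relation.ReflTransGen (Linked (cubePoly F) 2) b b' := by
  classical
  rw [eval_cubePoly_ne] at hb hb'
  have hstep : ∀ (a : Fin 3 → F) j w, (∀ i, a i ≠ 0) → w ≠ 0 →
      Relation.ReflTransGen (Linked (cubePoly F) 2) a (Function.update a j w) := by
    intro a j w ha hw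
    by_cases hwa : w = a j
    · rw [hwa, Function.update_eq_self]
    apply Relation.ReflTransGen.single
    obtain ⟨h, hd, hsel⟩ := cube_select hq a ha (univ.erase j)
    refine ⟨h, hd.trans (by simp), ?_, ?_⟩
    · rw [hsel]
      · intro i hi
        simp [Finset.ne_of_mem_erase hi]
      · intro i
        by_cases hi : i = j
        · subst hi; simpa using hw
        · simpa [hi] using ha i
    · intro c hc hch
      rw [eval_cubePoly_ne] at hc
      rw [hsel c hc] at hch
      have hca : ∀ i, i ≠ j → c i = a i := fun i hi => hch i (by simp [hi])
      -- there are only two nonzero values for the `j`-th coordinate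
      by_cases hw' : c j = a j
      · left
        funext i
        by_cases hi : i = j
        · rw [hi, hw']
        · exact hca i hi
      · right
        funext i
        by_cases hi : i = j
        · subst hi
          rw [Function.update_self, eq_neg_of_ne hq (hc i) (ha i) hw', eq_neg_of_ne hq hw (ha i) hwa]
        · simpa [hi] using hca i hi
  have h1 : ∀ s : Finset (Fin 3),
      Relation.ReflTransGen (Linked (cubePoly F) 2) b (s.piecewise b' b) := by
    intro s
    induction s using Finset.induction_on with
    | empty => simpa using Relation.ReflTransGen.refl
    | insert j s _ ih =>
      rw [Finset.piecewise_insert]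
      refine ih.trans (hstep _ _ _ (fun i => ?_) (hb' j))
      by_cases hi : i ∈ s
      · simpa [hi] using hb' i
      · simpa [hi] using hb i
  simpa using h1 univ

lemma cube_isolated {F : Type} [Field F] [Fintype F] (hq : Fintype.card F = 3) (b : Fin 3 → F)
    (hb : eval b (cubePoly F) ≠ 0) :
    ∃ h : MvPolynomial (Fin 3) F, h.totalDegree ≤ 2 + 1 ∧
      eval b h ≠ 0 ∧ ∀ b', eval b' (cubePoly F) ≠ 0 → eval b' h ≠ 0 → b' = b := by
  rw [eval_cubePoly_ne] at hb
  obtain ⟨h, hd, hsel⟩ := cube_select hq b hb univ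
  refine ⟨h, by simpa using hd, (hsel b hb).2 fun _ _ => rfl, fun b' hb' hne => ?_⟩
  rw [eval_cubePoly_ne] at hb'
  exact funext fun i => (hsel b' hb').1 hne i (Finset.mem_univ i)

open Classical in
/-- A base word of low weight, a linear form on a hyperplane; the weight of its lift bounds the
minimum distance from above. -/
def lightPoly (F : Type) [Field F] [Fintype F] (k : ℕ) : MvPolynomial (Fin (k + 2)) F :=
  X 0 * linProd 1 (univ.erase 0)

lemma totalDegree_lightPoly (F : Type) [Field F] [Fintype F] (k : ℕ) :
    (lightPoly F k).totalDegree ≤ Fintype.card F := by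
  classical
  have hq : 1 < Fintype.card F := Fintype.one_lt_card
  refine (totalDegree_mul _ _).trans ?_
  refine (add_le_add (totalDegree_X _).le (totalDegree_linProd _ _)).trans ?_
  rw [Finset.card_erase_of_mem (Finset.mem_univ _), Finset.card_univ]
  omega

lemma card_light (F : Type) [Field F] [Fintype F] (k : ℕ) :
    {b | eval b (lightPoly F k) ≠ 0}.ncard = (Fintype.card F - 1) * Fintype.card F ^ k := by
  classical
  let A : Fin (k + 2) → Finset F := Fin.cons (univ.erase 0) (Fin.cons {0} fun _ => univ)
  have : {b | eval b (lightPoly F k) ≠ 0} = (Fintype.piFinset A : Set (Fin (k + 2) → F)) := by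
    ext b
    rw [Set.mem_ofPred_eq, lightPoly, map_mul, mul_ne_zero_iff, eval_linProd_ne, Finset.mem_coe,
      Fintype.mem_piFinset]
    simp [A, Fin.forall_fin_succ]
  rw [this, Set.ncard_coe_finset, Fintype.card_piFinset, Fin.prod_univ_succ, Fin.prod_univ_succ]
  simp [A, Finset.card_univ]

/-! ### Conclusion -/

/-- The lift of a linked base word that is heavier than the light one is minimal and does not have
minimum weight. -/
lemma exists_of_base {F : Type} [Field F] [Fintype F] {k n t m r D : ℕ}
    (hm : k + 2 + n + t = m) (hr : r = Fintype.card F + n * (Fintype.card F - 1))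
    (hD : Fintype.card F + D < (k + 2) * (Fintype.card F - 1))
    (G : MvPolynomial (Fin (k + 2)) F) (hG : G.totalDegree ≤ Fintype.card F)
    (hcard : (Fintype.card F - 1) * Fintype.card F ^ k < {b | eval b G ≠ 0}.ncard)
    (hiso : ∀ b, eval b G ≠ 0 → ∃ h : MvPolynomial (Fin (k + 2)) F, h.totalDegree ≤ D + 1 ∧
      eval b h ≠ 0 ∧ ∀ b', eval b' G ≠ 0 → eval b' h ≠ 0 → b' = b)
    (hconn : ∀ b b', eval b G ≠ 0 → eval b' G ≠ 0 → Relation.ReflTransGen (Linked G D) b b') :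
    ∃ c : (Fin m → F) → F, c ∈ RM F r m ∧ c ≠ 0 ∧
      minDist (RM F r m) < wt c ∧
      ¬ ∃ c' : (Fin m → F) → F, c' ∈ RM F r m ∧ c' ≠ 0 ∧
          Function.support c' ⊂ Function.support c := by
  have hq : 1 < Fintype.card F := Fintype.one_lt_card
  let ε : Fin (k + 2) ⊕ Fin n ⊕ Fin t ≃ Fin m :=
    ((Equiv.sumCongr (Equiv.refl _) finSumFinEquiv).trans finSumFinEquiv).trans
      (finCongr (by omega))
  have hmem : ∀ G' : MvPolynomial (Fin (k + 2)) F, G'.totalDegree ≤ Fintype.card F →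
      Ev F m (liftPoly ε G') ∈ RM F r m := by
    intro G' hG'
    refine Ev_mem_RM _ ((totalDegree_liftPoly ε G').trans ?_)
    omega
  have hzero : wt (0 : (Fin m → F) → F) = 0 := by simp [wt]
  have hpos : 0 < Fintype.card F ^ t := by positivity
  have hlight : wt (Ev F m (liftPoly ε (lightPoly F k))) < wt (Ev F m (liftPoly ε G)) := by
    rw [wt_liftPoly, wt_liftPoly, card_light]
    exact Nat.mul_lt_mul_of_pos_right hcard hpos
  refine ⟨Ev F m (liftPoly ε G), hmem G hG, ?_, ?_, ?_⟩
  · intro h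
    rw [h, hzero] at hlight
    omega
  · refine lt_of_le_of_lt (Nat.sInf_le ⟨_, hmem _ (totalDegree_lightPoly F k), ?_, rfl⟩) hlight
    intro h
    have h1 := wt_liftPoly ε (lightPoly F k)
    rw [h, hzero, card_light] at h1
    have : 0 < (Fintype.card F - 1) * Fintype.card F ^ k * Fintype.card F ^ t :=
      Nat.mul_pos (Nat.mul_pos (by omega) (by positivity)) hpos
    omega
  · refine liftPoly_minimal ε G (D := D) ?_ hiso hconn
    rw [hr, ← hm, add_mul (k + 2 + n), add_mul (k + 2)]
    omega

/-- for `q ≥ 3`, `m ≥ 2`, `1 < r < m(q−1) − 1` with `r ≡ 1 (mod q−1)`,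
there is a nonzero codeword of `RM_q(r,m)` of weight strictly greater than the
minimum distance whose support strictly contains the support of no other nonzero
codeword. -/
theorem stmt_16 (F : Type) [Field F] [Fintype F] (q : ℕ) (hq : q = Fintype.card F)
    (hq3 : 3 ≤ q) (m r : ℕ) (hm : 2 ≤ m)
    (hr1 : 1 < r) (hr2 : r < m * (q - 1) - 1) (hrmod : r ≡ 1 [MOD q - 1]) :
    ∃ c : (Fin m → F) → F, c ∈ RM F r m ∧ c ≠ 0 ∧
      minDist (RM F r m) < wt c ∧
      ¬ ∃ c' : (Fin m → F) → F, c' ∈ RM F r m ∧ c' ≠ 0 ∧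
          Function.support c' ⊂ Function.support c := by
  subst hq
  -- write `r = a (q - 1) + 1` with `1 ≤ a`
  obtain ⟨p, hp⟩ : ∃ p, Fintype.card F = p + 1 := ⟨Fintype.card F - 1, by omega⟩
  have hp2 : 2 ≤ p := by omega
  rw [hp, Nat.add_sub_cancel] at hr2 hrmod
  obtain ⟨a, ha⟩ := (Nat.modEq_iff_dvd' hr1.le).1 hrmod.symm
  have hra : r = p * a + 1 := by omega
  obtain ⟨n, rfl⟩ : ∃ n, a = n + 1 := by
    refine ⟨a - 1, ?_⟩
    rcases Nat.eq_zero_or_pos a with rfl | h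
    · omega
    · omega
  have hr : r = Fintype.card F + n * (Fintype.card F - 1) := by
    rw [hra, hp, Nat.add_sub_cancel]
    ring
  by_cases hq4 : 4 ≤ Fintype.card F
  · have hnm : n + 1 < m := by
      by_contra hcon
      have := Nat.mul_le_mul_right p (not_lt.1 hcon)
      rw [mul_comm (n + 1)] at this
      omega
    refine exists_of_base (k := 0) (n := n) (t := m - n - 2) (D := Fintype.card F - 3)
      (by omega) hr (by omega) (axesPoly F) (totalDegree_axesPoly F) ?_ (axes_isolated hq4)
      axes_conn
    simpa using card_axes hq4
  · have hq : Fintype.card F = 3 := by omega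
    obtain rfl : p = 2 := by omega
    refine exists_of_base (k := 1) (n := n) (t := m - n - 3) (D := 2)
      (by omega) hr (by omega) (cubePoly F) ?_ ?_ (cube_isolated hq) (cube_conn hq)
    · rw [hq]; exact totalDegree_cubePoly F
    · rw [card_cube hq, hq]; norm_num

end
end

section
/- Let m, r be integers with m ≥ 1 and 0 ≤ r ≤ m(q−1). Then the generalized Reed–Muller code RM_q(r,m) is an MDS code (i.e., its minimum distance equals q^m − dim RM_q(r,m) + 1) if and only if m = 1, or r = 0, or r ≥ m(q−1) − 1. -/
/-!
Write `N = q ^ m` and `k = dim RM_q(r,m)`. By the Singleton bound (a code of dimension `k` has a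
nonzero word vanishing on any prescribed `k - 1` positions), being MDS means that every nonzero
codeword has weight greater than `N - k` (`minDist_eq_iff`). Since evaluation is injective on
reduced polynomials, `N - k` is the number of exponent vectors in `{0, …, q - 1} ^ m` with
coordinate sum greater than `r` (`finrank_RM_add_card`).

If `m = 1`, a nonzero polynomial of degree at most `r` has at most `r` roots. If `r = 0`, the code
consists of constants. If `r ≥ m (q - 1) - 1`, then `N - k ≤ 1`, with `N - k = 0` when
`r = m (q - 1)`; when `r = m (q - 1) - 1` no word has weight one, because the sum of the values of
a polynomial of degree less than `m (q - 1)` over `F ^ m` is zero.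

Now let `m ≥ 2` and `1 ≤ r ≤ m (q - 1) - 2`.
* If `r < (m - 1) (q - 1)`, every codeword sums to zero over the hyperplane `S = {x₀ = 0}`. When
  `|S| ≥ k`, the word of `X₀` has weight at most `N - k`. Otherwise enlarge `S` to a set `T` of `k`
  points and remove one point of `S`: a nonzero word vanishing on the remaining `k - 1` points also
  vanishes at the removed one, so its weight is at most `N - k` (`exists_low_weight_of_sum_zero`).
* If `r = (m - 1) (q - 1) + b`, the product of `1 - X_i ^ (q - 1)` for `i ≠ 0` and of `b` distinct
  factors `X₀ - a` gives a word of weight at most `q - b`, while there are at least `q - b`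
  exponent vectors of sum greater than `r`.
-/

open MvPolynomial Finset

noncomputable section

/-! ### Linear codes and the Singleton bound -/

lemma exists_ne_zero_vanish {F ι : Type} [Field F] [Fintype ι] (C : Submodule F (ι → F))
    (T : Finset ι) (h : #T < Module.finrank F C) :
    ∃ c ∈ C, c ≠ 0 ∧ ∀ i ∈ T, c i = 0 := by
  classical
  let φ : C →ₗ[F] (T → F) := (LinearMap.funLeft F F (Subtype.val : T → ι)).comp C.subtype
  have hk : LinearMap.ker φ ≠ ⊥ := by
    apply LinearMap.ker_ne_bot_of_finrank_lt
    simpa using h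
  obtain ⟨c, hc, hc0⟩ := Submodule.exists_mem_ne_zero_of_ne_bot hk
  refine ⟨c, c.2, by simpa using hc0, fun i hi => ?_⟩
  exact congrFun (LinearMap.mem_ker.1 hc) ⟨i, hi⟩

lemma wt_add_card_le {F ι : Type} [Zero F] [Fintype ι] (c : ι → F)
    (T : Finset ι) (h : ∀ i ∈ T, c i = 0) : wt c + #T ≤ Fintype.card ι := by
  classical
  have h1 : wt c ≤ #Tᶜ := by
    rw [wt, ← Set.ncard_coe_finset]
    refine Set.ncard_le_ncard (fun i hi => ?_) (Set.toFinite _)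
    simp only [coe_compl, Set.mem_compl_iff, mem_coe]
    exact fun hT => hi (h i hT)
  have h2 := card_compl_add_card T
  omega

/-- If all words of `C` sum to zero over a nonempty set `S` of positions and some nonzero word
vanishes on `S`, then `C` violates the MDS property. -/
lemma exists_low_weight_of_sum_zero {F ι : Type} [Field F] [Fintype ι] (C : Submodule F (ι → F))
    (S : Finset ι) (p : ι) (hp : p ∈ S) (hsum : ∀ c ∈ C, ∑ i ∈ S, c i = 0)
    (c₀ : ι → F) (hc₀ : c₀ ∈ C) (h0 : c₀ ≠ 0) (hv : ∀ i ∈ S, c₀ i = 0) :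
    ∃ c ∈ C, c ≠ 0 ∧ wt c + Module.finrank F C ≤ Fintype.card ι := by
  classical
  by_cases hS : Module.finrank F C ≤ #S
  · have := wt_add_card_le c₀ S hv
    exact ⟨c₀, hc₀, h0, by omega⟩
  have hk : Module.finrank F C ≤ Fintype.card ι := by
    simpa using Submodule.finrank_le C
  obtain ⟨T, hST, hT⟩ := Finset.exists_superset_card_eq (s := S) (not_le.1 hS).le hk
  have hT' : #(T.erase p) < Module.finrank F C := by
    rw [← hT]; exact card_erase_lt_of_mem (hST hp)
  obtain ⟨c, hc, hc0, hcv⟩ := exists_ne_zero_vanish C _ hT'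
  have hcp : c p = 0 := by
    rw [← hsum c hc]
    symm
    refine Finset.sum_eq_single_of_mem p hp fun i hi hip => ?_
    exact hcv i (mem_erase.2 ⟨hip, hST hi⟩)
  have := wt_add_card_le c T fun i hi => by
    by_cases hip : i = p
    · rw [hip, hcp]
    · exact hcv i (mem_erase.2 ⟨hip, hi⟩)
  exact ⟨c, hc, hc0, by omega⟩

lemma minDist_eq_iff {F : Type} [Field F] [Fintype F] {m : ℕ}
    (C : Submodule F ((Fin m → F) → F)) (hC : 0 < Module.finrank F C) :
    minDist C = Fintype.card F ^ m - Module.finrank F C + 1 ↔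
      ∀ c ∈ C, c ≠ 0 → Fintype.card F ^ m < wt c + Module.finrank F C := by
  classical
  have hN : Fintype.card (Fin m → F) = Fintype.card F ^ m := by simp
  have hk : Module.finrank F C ≤ Fintype.card F ^ m := by
    simpa using Submodule.finrank_le C
  constructor
  · intro h c hc hc0
    have : minDist C ≤ wt c := Nat.sInf_le ⟨c, hc, hc0, rfl⟩
    omega
  · intro h
    obtain ⟨T, -, hT⟩ := Finset.exists_subset_card_eq
      (s := (Finset.univ : Finset (Fin m → F))) (n := Module.finrank F C - 1)
      (by rw [card_univ]; omega)
    obtain ⟨c, hc, hc0, hcv⟩ := exists_ne_zero_vanish C T (by omega)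
    have h1 := wt_add_card_le c T hcv
    have h2 : minDist C ≤ wt c := Nat.sInf_le ⟨c, hc, hc0, rfl⟩
    obtain ⟨c', hc', hc0', hw⟩ : minDist C ∈ {w | ∃ c ∈ C, c ≠ 0 ∧ wt c = w} :=
      Nat.sInf_mem ⟨_, c, hc, hc0, rfl⟩
    have h3 := h c' hc' hc0'
    omega

/-! ### Dimension and membership for generalized Reed–Muller codes -/

lemma mem_Vq_iff {F : Type} [Field F] [Fintype F] {r m : ℕ} (f : MvPolynomial (Fin m) F) :
    f ∈ Vq F r m ↔ f.totalDegree ≤ r ∧ ∀ i, f.degreeOf i ≤ Fintype.card F - 1 := by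
  rw [Vq, Submodule.mem_inf, mem_restrictTotalDegree, mem_restrictDegree]
  simp only [degreeOf_le_iff]
  exact and_congr_right fun _ => ⟨fun h i s hs => h s hs i, fun h s hs i => h i s hs⟩

lemma mem_RM {F : Type} [Field F] [Fintype F] {r m : ℕ} (f : MvPolynomial (Fin m) F)
    (h1 : f.totalDegree ≤ r) (h2 : ∀ i, f.degreeOf i ≤ Fintype.card F - 1) :
    (fun x => eval x f) ∈ RM F r m :=
  ⟨f, (mem_Vq_iff f).2 ⟨h1, h2⟩, rfl⟩

/-- The reduced monomials of degree at most `r` form a basis of `V_q(r,m)`, on which evaluation is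
injective. -/
lemma finrank_RM (F : Type) [Field F] [Fintype F] (r m : ℕ) :
    Module.finrank F (RM F r m) =
      Nat.card {e : Fin m → Fin (Fintype.card F) // ∑ i, (e i : ℕ) ≤ r} := by
  classical
  have hq : 0 < Fintype.card F := Fintype.card_pos
  have hinj : Function.Injective ((Ev F m).domRestrict (Vq F r m)) := by
    rw [← LinearMap.ker_eq_bot, LinearMap.ker_eq_bot']
    rintro ⟨f, hf⟩ h
    have : f = 0 := eq_zero_of_eval_eq_zero _ _ f (fun v => congrFun h v) hf.2
    simpa using this
  have h1 : Module.finrank F (RM F r m) = Module.finrank F (Vq F r m) := by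
    rw [RM, ← LinearMap.range_domRestrict]
    exact LinearMap.finrank_range_of_inj hinj
  let s : Set (Fin m →₀ ℕ) :=
    {n | (n.sum fun _ e => e) ≤ r} ∩ {n | ∀ i, n i ≤ Fintype.card F - 1}
  have h2 : Vq F r m = restrictSupport F s := by
    ext f
    rw [Vq, Submodule.mem_inf, restrictTotalDegree, restrictDegree, mem_restrictSupport_iff,
      mem_restrictSupport_iff, mem_restrictSupport_iff, Set.subset_inter_iff]
  rw [h1, h2, Module.finrank_eq_nat_card_basis (basisRestrictSupport F s)]
  refine Nat.card_congr
    { toFun := fun n => ⟨fun i => ⟨n.1 i, ?_⟩, ?_⟩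
      invFun := fun e => ⟨Finsupp.equivFunOnFinite.symm fun i => (e.1 i : ℕ), ?_, ?_⟩
      left_inv := ?_
      right_inv := ?_ }
  · have := n.2.2 i
    omega
  · have := n.2.1
    simpa [Finsupp.sum_fintype] using this
  · have := e.2
    simpa [Finsupp.sum_fintype] using this
  · intro i
    have := (e.1 i).2
    simp only [Finsupp.equivFunOnFinite_symm_apply_apply]
    omega
  · intro n
    ext i
    simp
  · intro e
    ext i
    simp

lemma finrank_RM_add_card (F : Type) [Field F] [Fintype F] (r m : ℕ) :
    Module.finrank F (RM F r m) +
      Nat.card {e : Fin m → Fin (Fintype.card F) // r < ∑ i, (e i : ℕ)} = Fintype.card F ^ m := by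
  classical
  rw [finrank_RM, Nat.card_eq_fintype_card, Nat.card_eq_fintype_card]
  have := Fintype.card_subtype_compl
    (fun e : Fin m → Fin (Fintype.card F) => ∑ i, (e i : ℕ) ≤ r)
  have h2 := Fintype.card_subtype_le
    (fun e : Fin m → Fin (Fintype.card F) => ∑ i, (e i : ℕ) ≤ r)
  simp only [not_le, Fintype.card_fun, Fintype.card_fin] at this h2
  omega

lemma finrank_RM_pos (F : Type) [Field F] [Fintype F] (r m : ℕ) :
    0 < Module.finrank F (RM F r m) := by
  have h1 : (fun x => eval x (1 : MvPolynomial (Fin m) F)) ∈ RM F r m :=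
    mem_RM 1 (by simp) (by simp)
  rw [Module.finrank_pos_iff_exists_ne_zero]
  refine ⟨⟨_, h1⟩, fun h => ?_⟩
  have := congrFun (congrArg Subtype.val h) 0
  simp at this

/-- The unique reduced exponent vector of maximal degree `m (q - 1)` is the only one whose degree
can exceed `r ≥ m (q - 1) - 1`. -/
lemma card_exponents_le_one {q m r : ℕ} (h : m * (q - 1) - 1 ≤ r) :
    Nat.card {e : Fin m → Fin q // r < ∑ i, (e i : ℕ)} ≤ 1 := by
  rw [Finite.card_le_one_iff_subsingleton]
  have key : ∀ e : Fin m → Fin q, r < ∑ i, (e i : ℕ) → ∀ i, (e i : ℕ) = q - 1 := by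
    intro e he i
    by_contra hne
    have hlt : ∑ i, (e i : ℕ) < ∑ _i : Fin m, (q - 1) := by
      refine Finset.sum_lt_sum (fun j _ => ?_) ⟨i, mem_univ _, ?_⟩
      · have := (e j).2; omega
      · have := (e i).2; omega
    simp only [sum_const, card_univ, Fintype.card_fin, smul_eq_mul] at hlt
    omega
  refine ⟨fun a b => ?_⟩
  ext i
  rw [key a.1 a.2 i, key b.1 b.2 i]

lemma card_exponents_one_le {q r : ℕ} :
    Nat.card {e : Fin 1 → Fin q // r < ∑ i, (e i : ℕ)} ≤ q - 1 - r := by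
  have h : Nat.card {e : Fin 1 → Fin q // r < ∑ i, (e i : ℕ)} ≤ Nat.card (Finset.Ioo r q) := by
    refine Nat.card_le_card_of_injective
      (fun e => ⟨(e.1 0 : ℕ), mem_Ioo.2 ⟨by simpa using e.2, (e.1 0).2⟩⟩) fun a b hab => ?_
    ext i
    rw [Subsingleton.elim i 0]
    simpa using hab
  rw [Nat.card_eq_fintype_card (α := Finset.Ioo r q), Fintype.card_coe, Nat.card_Ioo] at h
  omega

/-- With `s = m (q - 1) - 1 - r`, the exponent vectors obtained from `(q - 1, …, q - 1)` by lowering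
the first coordinate by at most `s`, or the second one by `1`, all have sum greater than `r`. -/
lemma le_card_exponents {q m r s : ℕ} (hs : 1 ≤ s) (hsq : s ≤ q - 1)
    (h : r + 1 + s = (m + 2) * (q - 1)) :
    s + 2 ≤ Nat.card {e : Fin (m + 2) → Fin q // r < ∑ i, (e i : ℕ)} := by
  have hq : 0 < q := by omega
  -- lowering the coordinate `i` of the top exponent vector by `j`
  let g : Fin (m + 2) → ℕ → Fin (m + 2) → Fin q :=
    fun i j l => ⟨q - 1 - if l = i then j else 0, by omega⟩
  have hg : ∀ i j, j ≤ s → r < ∑ l, (g i j l : ℕ) := by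
    intro i j hj
    have h1 : ∑ l, (g i j l : ℕ) + ∑ l, (if l = i then j else 0) = (m + 2) * (q - 1) := by
      rw [← Finset.sum_add_distrib]
      have : ∀ l ∈ (Finset.univ : Finset (Fin (m + 2))),
          (g i j l : ℕ) + (if l = i then j else 0) = q - 1 := by
        intro l _
        simp only [g]
        split_ifs <;> omega
      rw [Finset.sum_congr rfl this]
      simp
    rw [Finset.sum_ite_eq' Finset.univ i] at h1
    simp only [mem_univ, if_true] at h1
    omega
  let φ : Option (Fin (s + 1)) → {e : Fin (m + 2) → Fin q // r < ∑ i, (e i : ℕ)} := fun o =>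
    match o with
    | none => ⟨g 1 1, hg 1 1 hs⟩
    | some j => ⟨g 0 j, hg 0 j (by omega)⟩
  have hφ : Function.Injective φ := by
    have hval : ∀ i j i' j', g i j = g i' j' → ∀ l, (if l = i then j else 0) ≤ q - 1 →
        (if l = i' then j' else 0) ≤ q - 1 →
        (if l = i then j else 0) = (if l = i' then j' else 0) := by
      intro i j i' j' hgg l h1 h2
      have := congrArg Fin.val (congrFun hgg l)
      simp only [g] at this
      omega
    intro a b hab
    have hab' := congrArg Subtype.val hab
    rcases a with _ | a <;> rcases b with _ | b
    · rfl
    · have := hval _ _ _ _ hab' 1 (by simp; omega) (by simp)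
      simp at this
    · have := hval _ _ _ _ hab' 1 (by simp) (by simp; omega)
      simp at this
    · have := hval _ _ _ _ hab' 0 (by simp; omega) (by simp; omega)
      simp only [if_true] at this
      rw [Fin.ext this]
  have := Nat.card_le_card_of_injective φ hφ
  rw [Nat.card_eq_fintype_card (α := Option (Fin (s + 1))), Fintype.card_option,
    Fintype.card_fin] at this
  exact this

/-! ### The MDS cases -/

lemma card_le_wt_add_of_one_variable {F : Type} [Field F] [Fintype F] {r : ℕ}
    (c : (Fin 1 → F) → F) (hc : c ∈ RM F r 1) (h0 : c ≠ 0) :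
    Fintype.card F ≤ wt c + r := by
  classical
  obtain ⟨f, hf, rfl⟩ := hc
  have hf0 : f ≠ 0 := by rintro rfl; simp at h0
  have hdeg := ((mem_Vq_iff f).1 hf).1
  have hz := schwartz_zippel_totalDegree hf0 (Finset.univ : Finset F)
  have hq : (0 : ℚ≥0) < Fintype.card F := by exact_mod_cast Fintype.card_pos
  rw [pow_one, card_univ, div_le_div_iff_of_pos_right hq] at hz
  have hz' : #{x : Fin 1 → F | eval x f = 0} ≤ f.totalDegree := by
    simpa using hz
  have hw : wt (Ev F 1 f) = #{x : Fin 1 → F | ¬ eval x f = 0} := by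
    rw [wt, ← Set.ncard_coe_finset]
    congr 1
    ext x
    simp [Ev]
  have := Finset.card_filter_add_card_filter_not
    (s := (Finset.univ : Finset (Fin 1 → F))) (fun x => eval x f = 0)
  simp only [card_univ, Fintype.card_fun, Fintype.card_fin, pow_one] at this
  omega

lemma wt_of_degree_zero {F : Type} [Field F] [Fintype F] {m : ℕ}
    (c : (Fin m → F) → F) (hc : c ∈ RM F 0 m) (h0 : c ≠ 0) :
    wt c = Fintype.card F ^ m := by
  classical
  obtain ⟨f, hf, rfl⟩ := hc
  have hdeg := Nat.le_zero.1 ((mem_Vq_iff f).1 hf).1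
  rw [totalDegree_eq_zero_iff_eq_C] at hdeg
  have ha : coeff 0 f ≠ 0 := by
    intro ha
    rw [ha, map_zero] at hdeg
    rw [hdeg] at h0
    simp at h0
  have : Function.support (Ev F m f) = Set.univ := by
    ext x
    rw [hdeg]
    simpa [Ev] using ha
  rw [wt, this, Set.ncard_univ]
  simp

lemma wt_pos {F ι : Type} [Zero F] [Finite ι] {c : ι → F} (h0 : c ≠ 0) : 0 < wt c := by
  rw [wt, Set.ncard_pos]
  exact Function.support_nonempty_iff.2 h0

lemma wt_ne_one_of_sum_zero {F ι : Type} [Field F] [Fintype ι] {c : ι → F}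
    (h : ∑ i, c i = 0) : wt c ≠ 1 := by
  intro hw
  obtain ⟨p, hp⟩ := Set.ncard_eq_one.1 hw
  have hpne : p ∈ Function.support c := by rw [hp]; rfl
  apply hpne
  rw [← h]
  symm
  refine Finset.sum_eq_single_of_mem p (mem_univ _) fun i _ hi => ?_
  by_contra hne
  have : i ∈ Function.support c := hne
  rw [hp] at this
  exact hi this

/-! ### The non-MDS cases -/

lemma totalDegree_one_sub_X_pow {F : Type} [Field F] {m : ℕ} (i : Fin m) (n : ℕ) :
    (1 - X i ^ n : MvPolynomial (Fin m) F).totalDegree ≤ n := by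
  refine (totalDegree_sub _ _).trans ?_
  simp

/-- A word of degree `r < (m - 1) (q - 1)` sums to zero over a hyperplane: multiply by the
indicator polynomial `1 - X₀ ^ (q - 1)` of the hyperplane and sum over the whole space. -/
lemma sum_hyperplane_eq_zero {F : Type} [Field F] [Fintype F] [DecidableEq F] {r m : ℕ}
    (hr : r < m * (Fintype.card F - 1)) (c : (Fin (m + 1) → F) → F) (hc : c ∈ RM F r (m + 1)) :
    ∑ x ∈ ({x | x 0 = 0} : Finset (Fin (m + 1) → F)), c x = 0 := by
  obtain ⟨f, hf, rfl⟩ := hc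
  have hdeg := ((mem_Vq_iff f).1 hf).1
  have h1 : (f * (1 - X 0 ^ (Fintype.card F - 1))).totalDegree <
      (Fintype.card F - 1) * Fintype.card (Fin (m + 1)) := by
    have := totalDegree_mul f (1 - X 0 ^ (Fintype.card F - 1))
    have := totalDegree_one_sub_X_pow (F := F) (0 : Fin (m + 1)) (Fintype.card F - 1)
    rw [Fintype.card_fin, mul_comm (Fintype.card F - 1), add_mul]
    omega
  refine Eq.trans ?_ (sum_eval_eq_zero _ h1)
  rw [Finset.sum_filter]
  refine Finset.sum_congr rfl fun x _ => ?_
  have hq : Fintype.card F - 1 ≠ 0 := by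
    have := Fintype.one_lt_card (α := F); omega
  split_ifs with hx
  · simp [hx, hq, Ev]
  · simp [FiniteField.pow_card_sub_one_eq_one _ hx]

lemma exists_low_weight_small {F : Type} [Field F] [Fintype F] {r m : ℕ} (h1 : 1 ≤ r)
    (hr : r < m * (Fintype.card F - 1)) :
    ∃ c ∈ RM F r (m + 1), c ≠ 0 ∧
      wt c + Module.finrank F (RM F r (m + 1)) ≤ Fintype.card F ^ (m + 1) := by
  classical
  have hq : 1 ≤ Fintype.card F - 1 := by
    have := Fintype.one_lt_card (α := F); omega
  have := exists_low_weight_of_sum_zero (RM F r (m + 1))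
    ({x | x 0 = 0} : Finset (Fin (m + 1) → F)) 0 (by simp)
    (fun c hc => sum_hyperplane_eq_zero hr c hc)
    (fun x => eval x (X 0)) (mem_RM (X 0) (by simpa using h1) fun i => by
      rw [degreeOf_X]; split_ifs <;> omega)
    (fun h => by simpa using congrFun h 1) (fun x hx => by simpa using hx)
  simpa using this

/-- The product of the indicator polynomial of the line `x_i = 0`, `i ≠ 0`, with a product of
distinct linear factors in `X₀` has degree `m (q - 1) + #B` and at most `q - #B` nonzero values. -/
lemma exists_wt_le_of_line {F : Type} [Field F] [Fintype F] {m : ℕ} (B : Finset F)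
    (hB : #B ≤ Fintype.card F - 1) :
    ∃ c ∈ RM F (m * (Fintype.card F - 1) + #B) (m + 1), c ≠ 0 ∧
      wt c ≤ Fintype.card F - #B := by
  classical
  have hq := Fintype.one_lt_card (α := F)
  let P : MvPolynomial (Fin (m + 1)) F := ∏ i : Fin m, (1 - X i.succ ^ (Fintype.card F - 1))
  let Q : MvPolynomial (Fin (m + 1)) F := ∏ a ∈ B, (X 0 - C a)
  have hPd : P.totalDegree ≤ m * (Fintype.card F - 1) := by
    refine (totalDegree_finsetProd _ _).trans ?_
    refine (Finset.sum_le_sum fun i _ => totalDegree_one_sub_X_pow _ _).trans ?_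
    simp
  have hQd : Q.totalDegree ≤ #B := by
    refine (totalDegree_finsetProd _ _).trans ?_
    refine (Finset.sum_le_sum (g := fun _ => 1) fun a _ => ?_).trans (by simp)
    exact (totalDegree_sub_C_le _ _).trans (by simp)
  have hP0 : P.degreeOf 0 = 0 := by
    refine Nat.le_zero.1 ((degreeOf_prod_le _ _ _).trans ?_)
    refine (Finset.sum_le_sum (g := fun _ => 0) fun i _ => ?_).trans (by simp)
    refine (degreeOf_sub_le _ _ _).trans ?_
    simp [degreeOf_X_pow_of_ne _ (Fin.succ_ne_zero i).symm]
  have hPs : ∀ j : Fin m, P.degreeOf j.succ ≤ Fintype.card F - 1 := by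
    intro j
    refine (degreeOf_prod_le _ _ _).trans ?_
    refine (Finset.sum_le_sum (g := fun i => if i = j then Fintype.card F - 1 else 0)
      fun i _ => ?_).trans (by simp)
    refine (degreeOf_sub_le _ _ _).trans ?_
    by_cases hij : i = j
    · simp [hij]
    · have : j.succ ≠ i.succ := fun h => hij (Fin.succ_injective _ h).symm
      simp [degreeOf_X_pow_of_ne _ this]
  have hQs : ∀ j : Fin m, Q.degreeOf j.succ = 0 := by
    intro j
    refine Nat.le_zero.1 ((degreeOf_prod_le _ _ _).trans ?_)
    refine (Finset.sum_le_sum (g := fun _ => 0) fun i _ => ?_).trans (by simp)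
    refine (degreeOf_sub_le _ _ _).trans ?_
    simp [degreeOf_X_of_ne (Fin.succ_ne_zero j)]
  have hev : ∀ x, eval x (P * Q) ≠ 0 ↔ (∀ i : Fin m, x i.succ = 0) ∧ x 0 ∉ B := by
    intro x
    simp only [P, Q, map_mul, map_prod, map_sub, map_one, map_pow, eval_X, eval_C, mul_ne_zero_iff,
      Finset.prod_ne_zero_iff]
    refine and_congr ⟨fun h i => ?_, fun h i _ => ?_⟩ ⟨fun h hx => ?_, fun h a ha => ?_⟩
    · by_contra hx
      exact h i (mem_univ _) (by rw [FiniteField.pow_card_sub_one_eq_one _ hx, sub_self])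
    · rw [h i, zero_pow (by omega)]
      simp
    · exact h _ hx (sub_self _)
    · intro hxa
      exact h (by rwa [sub_eq_zero.1 hxa])
  refine ⟨_, mem_RM (P * Q) ((totalDegree_mul _ _).trans (by omega)) fun i => ?_, ?_, ?_⟩
  · refine (degreeOf_mul_le _ _ _).trans ?_
    refine Fin.cases ?_ (fun j => ?_) i
    · have := degreeOf_le_totalDegree Q 0
      omega
    · have := hPs j
      have := hQs j
      omega
  · obtain ⟨a, ha⟩ : ∃ a, a ∉ B := by
      by_contra! h
      have : #B = Fintype.card F := by rw [Finset.eq_univ_iff_forall.2 h, card_univ]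
      omega
    intro h
    refine (hev (Fin.cons a 0)).2 ⟨fun i => by simp, by simpa using ha⟩ (congrFun h _)
  · have hsub : Function.support (fun x => eval x (P * Q)) ⊆
        (Bᶜ.image fun a => (Fin.cons a 0 : Fin (m + 1) → F) : Finset _) := by
      intro x hx
      obtain ⟨h1, h2⟩ := (hev x).1 hx
      simp only [coe_image, Set.mem_image, coe_compl, Set.mem_compl_iff, mem_coe]
      refine ⟨x 0, h2, ?_⟩
      funext i
      refine Fin.cases rfl (fun j => ?_) i
      simp [h1 j]
    calc wt (fun x => eval x (P * Q)) ≤ _ := Set.ncard_le_ncard hsub (Set.toFinite _)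
      _ ≤ #Bᶜ := by rw [Set.ncard_coe_finset]; exact card_image_le
      _ = _ := card_compl B

/-- `RM_q(r,m)` is an MDS code (its minimum distance equals
`q^m − dim RM_q(r,m) + 1`) if and only if `m = 1`, or `r = 0`, or `r ≥ m(q−1) − 1`. -/
theorem stmt_17 (F : Type) [Field F] [Fintype F] (q : ℕ) (hq : q = Fintype.card F)
    (m r : ℕ) (hm : 1 ≤ m) (hr : r ≤ m * (q - 1)) :
    minDist (RM F r m) = q ^ m - Module.finrank F (RM F r m) + 1 ↔
      (m = 1 ∨ r = 0 ∨ m * (q - 1) - 1 ≤ r) := by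
  subst hq
  have hq := Fintype.one_lt_card (α := F)
  rw [minDist_eq_iff _ (finrank_RM_pos F r m)]
  have hdim := finrank_RM_add_card F r m
  constructor
  · intro h
    by_contra! hcon
    obtain ⟨hm1, hr0, hr2⟩ := hcon
    obtain ⟨n, rfl⟩ : ∃ n, m = n + 2 := ⟨m - 2, by omega⟩
    by_cases hsmall : r < (n + 1) * (Fintype.card F - 1)
    · obtain ⟨c, hc, hc0, hw⟩ := exists_low_weight_small (F := F) (by omega : 1 ≤ r) hsmall
      exact absurd (h c hc hc0) (not_lt.2 hw)
    · have hmul : (n + 2) * (Fintype.card F - 1) =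
          (n + 1) * (Fintype.card F - 1) + (Fintype.card F - 1) := by ring
      obtain ⟨b, hb⟩ : ∃ b, r = (n + 1) * (Fintype.card F - 1) + b :=
        ⟨r - (n + 1) * (Fintype.card F - 1), by omega⟩
      obtain ⟨B, -, hB⟩ := Finset.exists_subset_card_eq
        (s := (Finset.univ : Finset F)) (n := b) (by rw [card_univ]; omega)
      obtain ⟨c, hc, hc0, hw⟩ := exists_wt_le_of_line (m := n + 1) B (by omega)
      rw [hB, ← hb] at hc
      have h1 := h c hc hc0
      have h2 := le_card_exponents (q := Fintype.card F) (m := n) (r := r)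
        (s := Fintype.card F - 2 - b) (by omega) (by omega) (by omega)
      omega
  · intro h c hc hc0
    rcases h with rfl | rfl | h
    · have h1 := card_le_wt_add_of_one_variable c hc hc0
      have h2 := card_exponents_one_le (q := Fintype.card F) (r := r)
      rw [pow_one] at hdim ⊢
      omega
    · have h1 := wt_of_degree_zero c hc hc0
      have h2 := finrank_RM_pos F 0 m
      omega
    · have h1 := wt_pos hc0
      have h2 := card_exponents_le_one h
      by_cases hlt : r < m * (Fintype.card F - 1)
      · have h3 : wt c ≠ 1 := by
          obtain ⟨f, hf, rfl⟩ := hc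
          refine wt_ne_one_of_sum_zero (sum_eval_eq_zero f ?_)
          have := ((mem_Vq_iff f).1 hf).1
          rw [Fintype.card_fin, mul_comm]
          omega
        omega
      · -- the code is the whole space: no exponent vector has sum exceeding `m (q - 1)`
        have h3 : Nat.card {e : Fin m → Fin (Fintype.card F) // r < ∑ i, (e i : ℕ)} = 0 := by
          rw [Finite.card_eq_zero_iff]
          refine ⟨fun e => ?_⟩
          have h4 : ∑ i, (e.1 i : ℕ) ≤ ∑ _i : Fin m, (Fintype.card F - 1) :=
            Finset.sum_le_sum fun i _ => by have := (e.1 i).2; omega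
          have h5 := e.2
          simp only [sum_const, card_univ, Fintype.card_fin, smul_eq_mul] at h4
          omega
        omega

end
end
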